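/- For every real β with 0 < β < 1, every real η with 0 < η < 1, and every m ∈ ℕ, there exist natural numbers n and N with m ≤ n < N such that the following holds: for every probability mass function P on binary strings of length N (i.e., P : (Fin N → Bool) → nonnegative reals with ∑ P = 1), there exist finite sets A_n, A_{n+1}, …, A_N of binary strings such that (1) for each i with n ≤ i ≤ N, every element of A_i has length i and the cardinality of A_i is at most 2^{β·i}; and (2) the P-probability of the set of strings of length N having some contiguous substring belonging to A_n ∪ … ∪ A_N is at least 1 − η. -/

import Mathlib

/-- The string `x` has a substring in `A i` for some `i` in `[a, b]`. -/
def HitBy (A : ℕ → Finset (List Bool)) (a b : ℕ) (x : List Bool) : Prop :=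
  ∃ i, a ≤ i ∧ i ≤ b ∧ ∃ τ ∈ A i, τ <:+: x

/-- For every large `ℓ` and every set `S` of at most `2 ^ (γ * ℓ)` strings of length `ℓ`, there is
`q` such that every weighted family of concatenations of `q` members of `S` can be hit, up to a
fraction `η` of its weight, by sets `A i` of at most `2 ^ (β * i)` strings of length `i`. -/
def BlocksHittable (β η γ : ℝ) : Prop :=
  ∃ n₀ : ℕ, ∀ ℓ : ℕ, n₀ ≤ ℓ → ∀ S : Finset (List Bool), S.Nonempty →
    (∀ τ ∈ S, τ.length = ℓ) → (S.card : ℝ) ≤ (2 : ℝ) ^ (γ * ℓ) →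
    ∃ q : ℕ, 2 ≤ q ∧ ∀ (ι : Type) (Ω : Finset ι) (x : ι → List Bool) (w : ι → ℝ),
      (∀ ω ∈ Ω, ∃ L : List (List Bool), L.length = q ∧ (∀ b ∈ L, b ∈ S) ∧ x ω = L.flatten) →
      (∀ ω, 0 ≤ w ω) →
      ∃ A : ℕ → Finset (List Bool),
        (∀ i : ℕ, ℓ ≤ i → i ≤ ℓ * q →
          (∀ τ ∈ A i, τ.length = i) ∧ ((A i).card : ℝ) ≤ (2 : ℝ) ^ (β * i)) ∧
        open scoped Classical in
        ∑ ω ∈ Ω with ¬ HitBy A ℓ (ℓ * q) (x ω), w ω ≤ η * ∑ ω ∈ Ω, w ω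

theorem List.exists_flatten_eq_of_length_eq_mul {α : Type*} (p q : ℕ) (L : List α)
    (h : L.length = p * q) :
    ∃ M : List (List α), M.length = q ∧ (∀ c ∈ M, c.length = p) ∧ M.flatten = L := by
  induction q generalizing L with
  | zero => exact ⟨[], by simp_all⟩
  | succ q ih =>
    obtain ⟨M, hM, hc, hf⟩ := ih (L.drop p) (by rw [List.length_drop, h, mul_add]; omega)
    refine ⟨L.take p :: M, by simp [hM], ?_, by simp [hf]⟩
    intro c hcm
    rcases List.mem_cons.1 hcm with rfl | hcm
    · rw [List.length_take, h, mul_add]; simp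
    · exact hc c hcm

theorem List.infix_flatten_of_mem {α : Type*} {b : List α} {L : List (List α)} (h : b ∈ L) :
    b <:+: L.flatten := by
  obtain ⟨s, t, rfl⟩ := List.append_of_mem h
  exact ⟨s.flatten, t.flatten, by simp⟩

theorem List.length_flatten_of_forall_length_eq {α : Type*} {ℓ : ℕ} {L : List (List α)}
    (h : ∀ b ∈ L, b.length = ℓ) : L.flatten.length = ℓ * L.length := by
  rw [List.length_flatten, List.map_congr_left h]
  simp [mul_comm]

/-- Greedy hitting sets: if each `B ω` contains a fraction at least `r` of `S`, then some `k`
elements of `S` miss at most a fraction `exp (-r * k)` of the total weight. -/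
theorem exists_hitting_set {ι α : Type*} [DecidableEq α] (S : Finset α) (hS : S.Nonempty) (Ω : Finset ι)
    (w : ι → ℝ) (hw : ∀ ω, 0 ≤ w ω) (B : ι → Finset α) (r : ℝ)
    (hB : ∀ ω ∈ Ω, B ω ⊆ S ∧ r * S.card ≤ (B ω).card) (k : ℕ) :
    ∃ A ⊆ S, A.card ≤ k ∧
      ∑ ω ∈ Ω with Disjoint (B ω) A, w ω ≤ Real.exp (-r * k) * ∑ ω ∈ Ω, w ω := by
  induction k with
  | zero => exact ⟨∅, by simp, by simp, by simp⟩
  | succ k ih =>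
    obtain ⟨A, hA, hc, hs⟩ := ih
    set T := Ω.filter (fun ω => Disjoint (B ω) A) with hT
    set W := ∑ ω ∈ T, w ω with hW
    have hW0 : 0 ≤ W := Finset.sum_nonneg fun ω _ => hw ω
    have hcount : ∑ s ∈ S, ∑ ω ∈ T with s ∈ B ω, w ω = ∑ ω ∈ T, (B ω).card * w ω := by
      simp_rw [Finset.sum_filter]
      rw [Finset.sum_comm]
      refine Finset.sum_congr rfl fun ω hω => ?_
      rw [← Finset.sum_filter, Finset.sum_const, nsmul_eq_mul,
        Finset.filter_mem_eq_inter,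
        Finset.inter_eq_right.2 (hB ω (Finset.mem_filter.1 hω).1).1]
    have hlow : ∑ _s ∈ S, r * W ≤ ∑ s ∈ S, ∑ ω ∈ T with s ∈ B ω, w ω := by
      rw [hcount, Finset.sum_const, nsmul_eq_mul, hW, Finset.mul_sum, Finset.mul_sum]
      refine Finset.sum_le_sum fun ω hω => ?_
      have := mul_le_mul_of_nonneg_right (hB ω (Finset.mem_filter.1 hω).1).2 (hw ω)
      linarith
    obtain ⟨s, hsS, hsle⟩ := Finset.exists_le_of_sum_le hS hlow
    refine ⟨insert s A, Finset.insert_subset hsS hA,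
      (Finset.card_insert_le _ _).trans (by omega), ?_⟩
    have heq : Ω.filter (fun ω => Disjoint (B ω) (insert s A)) = T.filter (fun ω => s ∉ B ω) := by
      ext ω
      simp only [hT, Finset.mem_filter, Finset.disjoint_insert_right]
      tauto
    have hsplit := Finset.sum_filter_add_sum_filter_not T (fun ω => s ∈ B ω) w
    have hexp : 1 - r ≤ Real.exp (-r) := by
      have := Real.add_one_le_exp (-r); linarith
    calc ∑ ω ∈ Ω with Disjoint (B ω) (insert s A), w ω
        = ∑ ω ∈ T with s ∉ B ω, w ω := by rw [heq]
      _ ≤ (1 - r) * W := by linarith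
      _ ≤ Real.exp (-r) * W := mul_le_mul_of_nonneg_right hexp hW0
      _ ≤ Real.exp (-r) * (Real.exp (-r * k) * ∑ ω ∈ Ω, w ω) := by gcongr
      _ = Real.exp (-r * (k + 1 : ℕ)) * ∑ ω ∈ Ω, w ω := by
        rw [← mul_assoc, ← Real.exp_add]; congr 2; push_cast; ring

/-- Concatenations of `p` blocks taken from some `K` members of `S`. -/
noncomputable def fewBlocks (S : Finset (List Bool)) (K p : ℕ) : Finset (List Bool) :=
  Finset.univ.image fun fg : (Fin K → S) × (Fin p → Fin K) =>
    (List.ofFn fun j => (fg.1 (fg.2 j) : List Bool)).flatten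

theorem card_fewBlocks_le (S : Finset (List Bool)) (K p : ℕ) :
    (fewBlocks S K p).card ≤ S.card ^ K * K ^ p := by
  refine Finset.card_image_le.trans ?_
  simp

theorem fewBlocks_nonempty {S : Finset (List Bool)} (hS : S.Nonempty) {K : ℕ} (hK : 0 < K)
    (p : ℕ) : (fewBlocks S K p).Nonempty := by
  obtain ⟨s, hs⟩ := hS
  exact Finset.Nonempty.image ⟨(fun _ => ⟨s, hs⟩, fun _ => ⟨0, hK⟩), Finset.mem_univ _⟩ _

theorem length_of_mem_fewBlocks {S : Finset (List Bool)} {ℓ K p : ℕ}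
    (hS : ∀ τ ∈ S, τ.length = ℓ) {τ : List Bool} (hτ : τ ∈ fewBlocks S K p) :
    τ.length = ℓ * p := by
  obtain ⟨fg, -, rfl⟩ := Finset.mem_image.1 hτ
  rw [List.length_flatten_of_forall_length_eq (ℓ := ℓ), List.length_ofFn]
  intro b hb
  obtain ⟨j, rfl⟩ := (List.mem_ofFn' _ _).1 hb
  exact hS _ (fg.1 (fg.2 j)).2

theorem flatten_mem_fewBlocks {S : Finset (List Bool)} (hS : S.Nonempty) {K : ℕ}
    {c : List (List Bool)} (hc : ∀ b ∈ c, b ∈ S) (hK : c.toFinset.card ≤ K) :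
    c.flatten ∈ fewBlocks S K c.length := by
  obtain ⟨s, hs⟩ := hS
  let e := c.toFinset.equivFin
  let f : Fin K → S := fun i =>
    if h : (i : ℕ) < c.toFinset.card then
      ⟨e.symm ⟨i, h⟩, hc _ (List.mem_toFinset.1 (e.symm ⟨i, h⟩).2)⟩
    else ⟨s, hs⟩
  let g : Fin c.length → Fin K := fun j =>
    Fin.castLE hK (e ⟨c.get j, List.mem_toFinset.2 (c.get_mem j)⟩)
  refine Finset.mem_image.2 ⟨(f, g), Finset.mem_univ _, ?_⟩
  have hfg : (fun j => (f (g j) : List Bool)) = c.get := by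
    funext j
    simp [f, g]
  simp only [hfg, List.ofFn_get]

theorem blocksHittable_self {β η : ℝ} (hη : 0 < η) : BlocksHittable β η β := by
  classical
  refine ⟨0, fun ℓ _ S _ hlen hcard => ⟨2, le_rfl, fun ι Ω x w hx hw =>
    ⟨fun i => if i = ℓ then S else ∅, ?_, ?_⟩⟩⟩
  · intro i _ _
    by_cases h : i = ℓ
    · subst h; simpa using ⟨hlen, hcard⟩
    · simp only [h, if_false]
      exact ⟨by simp, by simp; positivity⟩
  · rw [Finset.sum_eq_zero]
    · exact mul_nonneg hη.le (Finset.sum_nonneg fun ω _ => hw ω)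
    · intro ω hω
      obtain ⟨hωΩ, hmiss⟩ := Finset.mem_filter.1 hω
      obtain ⟨L, hL, hb, hxL⟩ := hx ω hωΩ
      obtain ⟨b, hbL⟩ := List.exists_mem_of_length_pos (l := L) (by omega)
      refine absurd ⟨ℓ, le_rfl, by omega, b, by simpa using hb b hbL, ?_⟩ hmiss
      rw [hxL]
      exact List.infix_flatten_of_mem hbL

/-- A number of distinct blocks large enough for a random set of size `2 ^ (β * ℓ)` to hit them
and small enough for `fewBlocks` to be sparse. -/
theorem exists_block_count {β γ C : ℝ} (hβ : 0 < β) (hβγ : β ≤ γ) (hC : 0 < C) :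
    ∃ n₀ : ℕ, ∀ ℓ : ℕ, n₀ ≤ ℓ → ∃ K : ℕ, 0 < K ∧
      C * 2 ^ ((γ - β) * ℓ) ≤ (K : ℝ) ∧ (K : ℝ) ≤ 2 ^ ((γ - 3 * β / 4) * ℓ) := by
  have htend : Filter.Tendsto (fun ℓ : ℕ => ((2 : ℝ) ^ (β / 4)) ^ ℓ) Filter.atTop Filter.atTop :=
    tendsto_pow_atTop_atTop_of_one_lt (Real.one_lt_rpow one_lt_two (by positivity))
  obtain ⟨n₀, hn₀⟩ := Filter.eventually_atTop.1 (htend.eventually_ge_atTop (C + 1))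
  refine ⟨n₀, fun ℓ hℓ => ⟨⌈C * 2 ^ ((γ - β) * ℓ)⌉₊, Nat.ceil_pos.2 (by positivity),
    Nat.le_ceil _, ?_⟩⟩
  have h1 : (1 : ℝ) ≤ 2 ^ ((γ - β) * ℓ) :=
    Real.one_le_rpow one_le_two (mul_nonneg (sub_nonneg.2 hβγ) ℓ.cast_nonneg)
  have h2 := hn₀ ℓ hℓ
  rw [← Real.rpow_mul_natCast two_pos.le] at h2
  calc (⌈C * 2 ^ ((γ - β) * ℓ)⌉₊ : ℝ) ≤ C * 2 ^ ((γ - β) * ℓ) + 1 :=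
        (Nat.ceil_lt_add_one (by positivity)).le
    _ ≤ (C + 1) * 2 ^ ((γ - β) * ℓ) := by linarith
    _ ≤ 2 ^ (β / 4 * ℓ) * 2 ^ ((γ - β) * ℓ) := by gcongr
    _ = 2 ^ ((γ - 3 * β / 4) * ℓ) := by
      rw [← Real.rpow_add two_pos]; congr 1; ring

theorem exists_card_fewBlocks_le {β γ : ℝ} (hβ : 0 < β) {ℓ K : ℕ} (hℓ : 0 < ℓ)
    {S : Finset (List Bool)} (hS : (S.card : ℝ) ≤ 2 ^ (γ * ℓ))
    (hK : (K : ℝ) ≤ 2 ^ ((γ - 3 * β / 4) * ℓ)) (n₀ : ℕ) :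
    ∃ p : ℕ, 2 ≤ p ∧ n₀ ≤ ℓ * p ∧
      ((fewBlocks S K p).card : ℝ) ≤ 2 ^ ((γ - β / 2) * (ℓ * p : ℕ)) := by
  obtain ⟨p₀, hp₀⟩ := exists_nat_ge (4 * γ * K / β)
  refine ⟨max (max 2 n₀) p₀, by simp, ?_, ?_⟩
  · exact ((le_max_right 2 n₀).trans (le_max_left _ _)).trans (Nat.le_mul_of_pos_left _ hℓ)
  set p := max (max 2 n₀) p₀
  have hp : 4 * γ * K / β ≤ p := hp₀.trans (by exact_mod_cast le_max_right _ _)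
  rw [div_le_iff₀ hβ] at hp
  calc ((fewBlocks S K p).card : ℝ) ≤ (S.card : ℝ) ^ K * (K : ℝ) ^ p := by
        exact_mod_cast card_fewBlocks_le S K p
    _ ≤ ((2 : ℝ) ^ (γ * ℓ)) ^ K * ((2 : ℝ) ^ ((γ - 3 * β / 4) * ℓ)) ^ p := by gcongr
    _ = 2 ^ (γ * ℓ * K + (γ - 3 * β / 4) * ℓ * p) := by
      rw [← Real.rpow_mul_natCast two_pos.le, ← Real.rpow_mul_natCast two_pos.le,
        ← Real.rpow_add two_pos]
    _ ≤ 2 ^ ((γ - β / 2) * (ℓ * p : ℕ)) := by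
      apply Real.rpow_le_rpow_of_exponent_le one_le_two
      push_cast
      have := mul_le_mul_of_nonneg_right hp (ℓ.cast_nonneg (α := ℝ))
      linarith

theorem exp_neg_mul_floor_le {β γ η : ℝ} (hβ : 0 < β) (hη : 0 < η) (hη1 : η < 1) {ℓ K s : ℕ}
    (hs : 0 < s) (hS : (s : ℝ) ≤ 2 ^ (γ * ℓ))
    (hK : 2 * Real.log η⁻¹ * 2 ^ ((γ - β) * ℓ) ≤ (K : ℝ)) :
    Real.exp (-(K / s : ℝ) * ⌊(2 : ℝ) ^ (β * ℓ)⌋₊) ≤ η := by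
  have hlog : 0 < Real.log η⁻¹ := Real.log_pos ((one_lt_inv₀ hη).2 hη1)
  rw [← Real.le_log_iff_exp_le hη, neg_mul, neg_le, ← Real.log_inv, div_mul_eq_mul_div,
    le_div_iff₀ (by exact_mod_cast hs)]
  have h1 : (1 : ℝ) ≤ 2 ^ (β * ℓ) :=
    Real.one_le_rpow one_le_two (by positivity)
  have hfloor : (2 : ℝ) ^ (β * ℓ) / 2 ≤ ⌊(2 : ℝ) ^ (β * ℓ)⌋₊ := by
    have := Nat.lt_floor_add_one ((2 : ℝ) ^ (β * ℓ))
    have : (1 : ℝ) ≤ ⌊(2 : ℝ) ^ (β * ℓ)⌋₊ := by exact_mod_cast Nat.floor_pos.2 h1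
    linarith
  calc Real.log η⁻¹ * s ≤ Real.log η⁻¹ * 2 ^ (γ * ℓ) := by gcongr
    _ = 2 * Real.log η⁻¹ * 2 ^ ((γ - β) * ℓ) * (2 ^ (β * ℓ) / 2) := by
      rw [show γ * ℓ = (γ - β) * ℓ + β * ℓ by ring, Real.rpow_add two_pos]; ring
    _ ≤ K * ⌊(2 : ℝ) ^ (β * ℓ)⌋₊ := by gcongr

/-- A concatenation of `p * q` blocks from `S` is a concatenation of `q` members of
`fewBlocks S K p`, or it contains at least `K` distinct members of `S`. -/
theorem flatten_fewBlocks_or_le_card {S : Finset (List Bool)} (hS : S.Nonempty) {K p q : ℕ}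
    {L : List (List Bool)} (hL : L.length = p * q) (hLS : ∀ b ∈ L, b ∈ S) :
    (∃ M : List (List Bool), M.length = q ∧ (∀ b ∈ M, b ∈ fewBlocks S K p) ∧
      L.flatten = M.flatten) ∨ K ≤ (S.filter (· <:+: L.flatten)).card := by
  obtain ⟨M, hM, hc, rfl⟩ := List.exists_flatten_eq_of_length_eq_mul p q L hL
  by_cases h : ∀ c ∈ M, c.toFinset.card ≤ K
  · refine Or.inl ⟨M.map List.flatten, by simpa using hM, ?_, List.flatten_flatten⟩
    intro b hb
    obtain ⟨c, hcM, rfl⟩ := List.mem_map.1 hb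
    rw [← hc c hcM]
    exact flatten_mem_fewBlocks hS (fun b hb => hLS b (List.mem_flatten_of_mem hcM hb)) (h c hcM)
  · push Not at h
    obtain ⟨c, hcM, hcK⟩ := h
    refine Or.inr (hcK.le.trans (Finset.card_le_card fun b hb => ?_))
    have hbM := List.mem_flatten_of_mem hcM (List.mem_toFinset.1 hb)
    exact Finset.mem_filter.2 ⟨hLS b hbM, List.infix_flatten_of_mem hbM⟩

theorem BlocksHittable.add_half {β η γ : ℝ} (hβ : 0 < β) (hη : 0 < η) (hη1 : η < 1)
    (hβγ : β ≤ γ) (h : BlocksHittable β η (γ - β / 2)) : BlocksHittable β η γ := by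
  classical
  obtain ⟨n₁, h⟩ := h
  have hlog : 0 < Real.log η⁻¹ := Real.log_pos ((one_lt_inv₀ hη).2 hη1)
  obtain ⟨n₂, hcount⟩ := exists_block_count hβ hβγ (mul_pos two_pos hlog)
  refine ⟨max 1 n₂, fun ℓ hℓ S hS hlen hcard => ?_⟩
  have hℓ0 : 0 < ℓ := (le_max_left 1 n₂).trans hℓ
  obtain ⟨K, hK0, hKlow, hKup⟩ := hcount ℓ ((le_max_right 1 n₂).trans hℓ)
  obtain ⟨p, hp2, hp, hpcard⟩ := exists_card_fewBlocks_le hβ hℓ0 hcard hKup n₁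
  obtain ⟨q, hq2, hq⟩ := h (ℓ * p) hp _ (fewBlocks_nonempty hS hK0 p)
    (fun τ hτ => length_of_mem_fewBlocks hlen hτ) hpcard
  refine ⟨p * q, by nlinarith, fun ι Ω x w hx hw => ?_⟩
  let Good : ι → Prop := fun ω => ∃ M : List (List Bool), M.length = q ∧
    (∀ b ∈ M, b ∈ fewBlocks S K p) ∧ x ω = M.flatten
  obtain ⟨A, hA, hAmiss⟩ := hq ι (Ω.filter Good) x w (fun ω hω => (Finset.mem_filter.1 hω).2) hw
  have hbad : ∀ ω ∈ Ω.filter (¬ Good ·), K ≤ (S.filter (· <:+: x ω)).card := by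
    intro ω hω
    obtain ⟨hωΩ, hbad⟩ := Finset.mem_filter.1 hω
    obtain ⟨L, hL, hLS, hxL⟩ := hx ω hωΩ
    have := flatten_fewBlocks_or_le_card (K := K) hS hL hLS
    rw [← hxL] at this
    exact this.resolve_left hbad
  have hs0 : 0 < S.card := hS.card_pos
  have hs0' : (S.card : ℝ) ≠ 0 := by exact_mod_cast hs0.ne'
  obtain ⟨A₀, hA₀S, hA₀card, hA₀miss⟩ := exists_hitting_set S hS (Ω.filter (¬ Good ·)) w hw
    (fun ω => S.filter (· <:+: x ω)) (K / S.card)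
    (fun ω hω => ⟨Finset.filter_subset _ _, by
      rw [div_mul_cancel₀ _ hs0']; exact_mod_cast hbad ω hω⟩) ⌊(2 : ℝ) ^ (β * ℓ)⌋₊
  replace hA₀miss := hA₀miss.trans (mul_le_mul_of_nonneg_right
    (exp_neg_mul_floor_le hβ hη hη1 hs0 hcard hKlow) (Finset.sum_nonneg fun ω _ => hw ω))
  have hℓp : ℓ < ℓ * p := by nlinarith
  have hℓpq : ℓ ≤ ℓ * (p * q) := Nat.le_mul_of_pos_right _ (by positivity)
  let A' : ℕ → Finset (List Bool) := fun i => if i = ℓ then A₀ else if ℓ * p ≤ i then A i else ∅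
  refine ⟨A', ?_, ?_⟩
  · intro i _ hi
    by_cases h1 : i = ℓ
    · subst h1
      simp only [A', if_true]
      exact ⟨fun τ hτ => hlen τ (hA₀S hτ), (Nat.cast_le.2 hA₀card).trans
        (Nat.floor_le (by positivity))⟩
    · by_cases h2 : ℓ * p ≤ i
      · simp only [A', h1, h2, if_true, if_false]
        exact hA i h2 (by rwa [mul_assoc])
      · simp only [A', h1, h2, if_false]
        exact ⟨by simp, by simp; positivity⟩
  · have hgood_hit : ∀ ω, HitBy A (ℓ * p) (ℓ * p * q) (x ω) → HitBy A' ℓ (ℓ * (p * q)) (x ω) := by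
      rintro ω ⟨i, hi1, hi2, τ, hτ, hτx⟩
      refine ⟨i, by omega, by rwa [← mul_assoc], τ, ?_, hτx⟩
      have h1 : i ≠ ℓ := by omega
      simpa [A', h1, hi1] using hτ
    have hbad_hit : ∀ ω, ¬ Disjoint (S.filter (· <:+: x ω)) A₀ →
        HitBy A' ℓ (ℓ * (p * q)) (x ω) := by
      intro ω hω
      obtain ⟨τ, hτ, hτA⟩ := Finset.not_disjoint_iff.1 hω
      exact ⟨ℓ, le_rfl, hℓpq, τ, by simpa [A'] using hτA, (Finset.mem_filter.1 hτ).2⟩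
    rw [← Finset.sum_filter_add_sum_filter_not Ω Good w, mul_add,
      ← Finset.sum_filter_add_sum_filter_not (Ω.filter _) Good w]
    refine add_le_add (le_trans ?_ hAmiss) (le_trans ?_ hA₀miss)
    · refine Finset.sum_le_sum_of_subset_of_nonneg (fun ω hω => ?_) fun ω _ _ => hw ω
      simp only [Finset.mem_filter] at hω ⊢
      exact ⟨⟨hω.1.1, hω.2⟩, fun hh => hω.1.2 (hgood_hit ω hh)⟩
    · refine Finset.sum_le_sum_of_subset_of_nonneg (fun ω hω => ?_) fun ω _ _ => hw ω
      rw [Finset.mem_filter, Finset.mem_filter] at hω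
      rw [Finset.mem_filter, Finset.mem_filter]
      exact ⟨⟨hω.1.1, hω.2⟩, by_contra fun hh => hω.1.2 (hbad_hit ω hh)⟩

theorem blocksHittable_add_nat_mul {β η : ℝ} (hβ : 0 < β) (hη : 0 < η) (hη1 : η < 1) (k : ℕ) :
    BlocksHittable β η (β + k * (β / 2)) := by
  induction k with
  | zero => simpa using blocksHittable_self hη
  | succ k ih =>
    refine BlocksHittable.add_half hβ hη hη1 (le_add_of_nonneg_right (by positivity)) ?_
    convert ih using 1
    push_cast
    ring

open scoped Classical in
theorem rumyantsev_lemma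
    (β η : ℝ) (hβ : 0 < β ∧ β < 1) (hη : 0 < η ∧ η < 1) (m : ℕ) :
    ∃ n N : ℕ, m ≤ n ∧ n < N ∧
      ∀ P : (Fin N → Bool) → NNReal, (∑ σ : Fin N → Bool, P σ) = 1 →
        ∃ A : ℕ → Finset (List Bool),
          (∀ i : ℕ, n ≤ i → i ≤ N →
            (∀ τ ∈ A i, τ.length = i) ∧ ((A i).card : ℝ) ≤ (2 : ℝ) ^ (β * i)) ∧
          1 - η ≤ ((∑ σ ∈ Finset.univ.filter
              (fun σ : Fin N → Bool => ∃ i, n ≤ i ∧ i ≤ N ∧ ∃ τ ∈ A i, τ <:+: List.ofFn σ),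
              P σ : NNReal) : ℝ) := by
  obtain ⟨k, hk⟩ := exists_nat_ge (2 / β)
  rw [div_le_iff₀ hβ.1] at hk
  obtain ⟨n₀, h⟩ := blocksHittable_add_nat_mul hβ.1 hη.1 hη.2 k
  set n := max (max 1 m) n₀
  have hn0 : 0 < n := (le_max_left 1 m).trans (le_max_left _ _)
  let S : Finset (List Bool) := Finset.univ.image (List.ofFn : (Fin n → Bool) → List Bool)
  have hmemS : ∀ τ : List Bool, τ ∈ S ↔ τ.length = n := by
    intro τ
    simp only [S, Finset.mem_image, Finset.mem_univ, true_and]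
    constructor
    · rintro ⟨f, rfl⟩
      simp
    · intro hτ
      rw [← hτ]
      exact ⟨τ.get, List.ofFn_get τ⟩
  have hScard : (S.card : ℝ) ≤ 2 ^ ((β + k * (β / 2)) * n) := by
    calc (S.card : ℝ) ≤ 2 ^ n := by
          have : S.card ≤ 2 ^ n := Finset.card_image_le.trans (by simp)
          exact_mod_cast this
      _ = (2 : ℝ) ^ (n : ℝ) := (Real.rpow_natCast _ _).symm
      _ ≤ _ := Real.rpow_le_rpow_of_exponent_le one_le_two
        (le_mul_of_one_le_left n.cast_nonneg (by linarith [hβ.1]))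
  obtain ⟨q, hq2, hq⟩ := h n (le_max_right _ _) S
    ⟨List.replicate n true, (hmemS _).2 (by simp)⟩ (fun τ => (hmemS τ).1) hScard
  refine ⟨n, n * q, (le_max_right 1 m).trans (le_max_left _ _), by nlinarith, fun P hP => ?_⟩
  obtain ⟨A, hA, hmiss⟩ := hq (Fin (n * q) → Bool) Finset.univ List.ofFn (fun σ => (P σ : ℝ))
    (fun σ _ => by
      obtain ⟨L, hL, hLn, hLf⟩ :=
        List.exists_flatten_eq_of_length_eq_mul n q (List.ofFn σ) (by simp)
      exact ⟨L, hL, fun b hb => (hmemS b).2 (hLn b hb), hLf.symm⟩)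
    (fun σ => (P σ).coe_nonneg)
  refine ⟨A, hA, ?_⟩
  have hP' : ∑ σ, (P σ : ℝ) = 1 := by exact_mod_cast hP
  have hsplit := Finset.sum_filter_add_sum_filter_not Finset.univ
    (fun σ : Fin (n * q) → Bool => HitBy A n (n * q) (List.ofFn σ)) (fun σ => (P σ : ℝ))
  rw [hP'] at hsplit hmiss
  push_cast
  change 1 - η ≤ ∑ σ with HitBy A n (n * q) (List.ofFn σ), (P σ : ℝ)
  linarith
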